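/- arXiv:2412.05673 — 2 statements merged into one kernel-verified Lean document; each statement's English description precedes it below -/
import Mathlib

section
/- For all real a > 0 and b > 0, ∫₀^∞ x^{-1/2} · exp(−(a·x + b/x)/2) dx = √(2π/a) · exp(−√(a·b)). (This is the normalization identity for the GIG distribution with index p = 1/2, which underlies the full conditional distribution of each latent scale λᵢ in the Gibbs sampler, and shows that an exponential scale mixture of centered Gaussians has a Laplace-type marginal, so that ℓ₁ regression emerges from the hierarchy with λᵢ ~ Gamma(1,1).) -/
open MeasureTheory Real Set

lemma gig_aux (α β : ℝ) (ha : 0 < α) (hb : 0 < β) :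
    2 * α * ∫ t in Ioi (0 : ℝ), Real.exp (-(1 / 2) * (α * t - β / t) ^ 2)
      = Real.sqrt (2 * π) := by
  set g : ℝ → ℝ := fun u => Real.exp (-(1 / 2) * u ^ 2) with hg
  have hgi : Integrable g := integrable_exp_neg_mul_sq (by norm_num)
  have hgI : ∫ u, g u = Real.sqrt (2 * π) := by
    rw [hg, integral_gaussian]; congr 1; ring
  have hder : ∀ t ∈ Ioi (0 : ℝ), HasDerivWithinAt (fun t => α * t - β / t)
      (α + β / t ^ 2) (Ioi 0) t := by
    intro t ht
    have ht0 : t ≠ 0 := (mem_Ioi.mp ht).ne'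
    have h1 := ((hasDerivAt_id t).const_mul α).sub ((hasDerivAt_inv ht0).const_mul β)
    have h2 : HasDerivAt (fun t => α * t - β / t) (α + β / t ^ 2) t := by
      have e : (fun t => α * t - β / t) = (fun y => α * id y) - fun y => β * y⁻¹ := by
        ext x; simp [div_eq_mul_inv]
      rw [e]
      exact h1.congr_deriv (by simp [div_eq_mul_inv])
    exact h2.hasDerivWithinAt
  have hinj : InjOn (fun t => α * t - β / t) (Ioi (0 : ℝ)) := by
    have : StrictMonoOn (fun t => α * t - β / t) (Ioi (0 : ℝ)) := by
      intro x hx y hy hxy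
      have hx' : 0 < x := hx
      have h1 : α * x < α * y := by gcongr
      have h2 : β / y < β / x := by gcongr
      simp only
      linarith
    exact this.injOn
  have himg : (fun t => α * t - β / t) '' (Ioi (0 : ℝ)) = univ := by
    refine eq_univ_of_forall fun u => ?_
    have hs : Real.sqrt (u ^ 2 + 4 * α * β) ^ 2 = u ^ 2 + 4 * α * β := Real.sq_sqrt (by positivity)
    have hlt : |u| < Real.sqrt (u ^ 2 + 4 * α * β) := by
      rw [← Real.sqrt_sq_eq_abs]
      apply Real.sqrt_lt_sqrt (by positivity)
      have : 0 < 4 * α * β := by positivity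
      linarith
    have hpos : 0 < u + Real.sqrt (u ^ 2 + 4 * α * β) := by
      have := neg_abs_le u
      linarith
    refine ⟨(u + Real.sqrt (u ^ 2 + 4 * α * β)) / (2 * α), by simp only [mem_Ioi]; positivity, ?_⟩
    generalize Real.sqrt (u ^ 2 + 4 * α * β) = s at *
    have hne := hpos.ne'
    simp only
    field_simp
    nlinarith
  have hI1 : IntegrableOn (fun t => |α + β / t ^ 2| • g (α * t - β / t)) (Ioi 0) := by
    rw [← integrableOn_image_iff_integrableOn_abs_deriv_smul measurableSet_Ioi hder hinj g, himg]
    exact hgi.integrableOn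
  have hE1 := integral_image_eq_integral_abs_deriv_smul measurableSet_Ioi hder hinj g
  rw [himg, setIntegral_univ, hgI] at hE1
  have hpw : ∀ t ∈ Ioi (0 : ℝ), |α + β / t ^ 2| • g (α * t - β / t)
      = α * g (α * t - β / t) + β / t ^ 2 * g (α * t - β / t) := by
    intro t ht
    have : 0 < t := ht
    rw [abs_of_pos (by positivity), smul_eq_mul]; ring
  have hI2 : IntegrableOn (fun t => α * g (α * t - β / t)) (Ioi 0) := by
    refine Integrable.mono' hI1 (by apply Measurable.aestronglyMeasurable; fun_prop) ?_
    filter_upwards [ae_restrict_mem measurableSet_Ioi] with t ht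
    have ht' : 0 < t := ht
    have hgp : 0 < g (α * t - β / t) := Real.exp_pos _
    rw [hpw t ht, Real.norm_of_nonneg (by positivity)]
    have : 0 < β / t ^ 2 * g (α * t - β / t) := by positivity
    linarith
  have hI3 : IntegrableOn (fun t => β / t ^ 2 * g (α * t - β / t)) (Ioi 0) := by
    refine Integrable.mono' hI1 (by apply Measurable.aestronglyMeasurable; fun_prop) ?_
    filter_upwards [ae_restrict_mem measurableSet_Ioi] with t ht
    have ht' : 0 < t := ht
    have hgp : 0 < g (α * t - β / t) := Real.exp_pos _
    rw [hpw t ht, Real.norm_of_nonneg (by positivity)]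
    have : 0 < α * g (α * t - β / t) := by positivity
    linarith
  rw [setIntegral_congr_fun measurableSet_Ioi hpw, integral_add hI2 hI3] at hE1
  have hder2 : ∀ t ∈ Ioi (0 : ℝ), HasDerivWithinAt (fun t => β / α / t)
      (-(β / α / t ^ 2)) (Ioi 0) t := by
    intro t ht
    have ht0 : t ≠ 0 := (mem_Ioi.mp ht).ne'
    have h1 := (hasDerivAt_inv ht0).const_mul (β / α)
    have h2 : HasDerivAt (fun t => β / α / t) (-(β / α / t ^ 2)) t := by
      have e : (fun t => β / α / t) = fun y => β / α * y⁻¹ := by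
        ext x; simp [div_eq_mul_inv]
      rw [e]
      exact h1.congr_deriv (by simp [div_eq_mul_inv])
    exact h2.hasDerivWithinAt
  have hinj2 : InjOn (fun t => β / α / t) (Ioi (0 : ℝ)) := by
    intro x hx y hy hxy
    have hx' : 0 < x := hx
    have hy' : 0 < y := hy
    simp only at hxy
    field_simp at hxy
    linarith
  have himg2 : (fun t => β / α / t) '' (Ioi (0 : ℝ)) = Ioi 0 := by
    ext u
    constructor
    · rintro ⟨t, ht, rfl⟩
      have : 0 < t := ht
      simp only [mem_Ioi]; positivity
    · intro hu
      have hu' : 0 < u := hu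
      refine ⟨β / α / u, by simp only [mem_Ioi]; positivity, ?_⟩
      simp only
      field_simp
  have hE2 := integral_image_eq_integral_abs_deriv_smul measurableSet_Ioi hder2 hinj2
    (fun t => α * g (α * t - β / t))
  rw [himg2] at hE2
  have hpw2 : ∀ t ∈ Ioi (0 : ℝ), |-(β / α / t ^ 2)| •
      (fun t => α * g (α * t - β / t)) (β / α / t) = β / t ^ 2 * g (α * t - β / t) := by
    intro t ht
    have ht' : 0 < t := ht
    rw [abs_neg, abs_of_pos (by positivity), smul_eq_mul]
    have h1 : α * (β / α / t) - β / (β / α / t) = -(α * t - β / t) := by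
      field_simp
      ring
    have h2 : g (-(α * t - β / t)) = g (α * t - β / t) := by simp only [hg, neg_sq]
    simp only [h1, h2]
    field_simp
  rw [setIntegral_congr_fun measurableSet_Ioi hpw2] at hE2
  rw [← hE2, integral_const_mul] at hE1
  rw [hE1]
  ring

/-- The normalization identity for the `GIG` distribution with
index `p = 1/2`: for all `a, b > 0`,
`∫₀^∞ x^(-1/2) exp(-(a x + b / x)/2) dx = √(2π/a) · exp(-√(a b))`. -/
theorem gig_half_normalization (a b : ℝ) (ha : 0 < a) (hb : 0 < b) :
    (∫ x in Ioi (0 : ℝ), x ^ (-(1 : ℝ) / 2) * Real.exp (-(a * x + b / x) / 2))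
      = Real.sqrt (2 * π / a) * Real.exp (-Real.sqrt (a * b)) := by
  have hα := Real.sqrt_pos.mpr ha
  have hβ := Real.sqrt_pos.mpr hb
  have key := gig_aux _ _ hα hβ
  rw [← integral_comp_rpow_Ioi_of_pos (p := 2) (by norm_num)]
  have hpw : ∀ t ∈ Ioi (0 : ℝ), ((2 : ℝ) * t ^ ((2 : ℝ) - 1)) •
      ((t ^ (2 : ℝ)) ^ (-(1 : ℝ) / 2) * Real.exp (-(a * t ^ (2 : ℝ) + b / t ^ (2 : ℝ)) / 2))
      = (2 * Real.exp (-Real.sqrt (a * b))) *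
        Real.exp (-(1 / 2) * (Real.sqrt a * t - Real.sqrt b / t) ^ 2) := by
    intro t ht
    have ht' : 0 < t := ht
    have h1 : (t ^ (2 : ℝ)) ^ (-(1 : ℝ) / 2) = t⁻¹ := by
      rw [← Real.rpow_mul ht'.le, ← Real.rpow_neg_one]; norm_num
    have h2 : t ^ ((2 : ℝ) - 1) = t := by norm_num
    rw [h1, h2, Real.rpow_two, mul_assoc, ← Real.exp_add, smul_eq_mul,
      Real.sqrt_mul ha.le]
    have h3 : -(√a * √b) + -(1 / 2) * (√a * t - √b / t) ^ 2 = -(a * t ^ 2 + b / t ^ 2) / 2 := by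
      have e1 := Real.sq_sqrt ha.le
      have e2 := Real.sq_sqrt hb.le
      rw [← e1, ← e2, Real.sqrt_sq hα.le, Real.sqrt_sq hβ.le]
      field_simp
      ring
    rw [h3]
    field_simp
  rw [setIntegral_congr_fun measurableSet_Ioi hpw, integral_const_mul,
    Real.sqrt_div (by positivity), ← key]
  field_simp
end

section
/- For each α > 0 let Z(α) = ∫_ℝ exp(−ℓ_{SPH,α}(t)) dt, which is finite and positive, and let f_α(ε) = exp(−ℓ_{SPH,α}(ε))/Z(α) be the generalized error density associated with the SPH loss. Then for every fixed ε ∈ ℝ, f_α(ε) → (1/√(2π))·exp(−ε²/2) as α → ∞; that is, the SPH generalized density converges pointwise to the standard normal density as α tends to infinity. -/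
open MeasureTheory Real Set Filter

/-- The scaled pseudo-Huber (SPH) loss. -/
noncomputable def lSPH (α t : ℝ) : ℝ :=
  α * Real.sqrt (α ^ 2 + 1) * (Real.sqrt (1 + t ^ 2 / α ^ 2) - 1)

lemma lSPH_eq {α : ℝ} (h : 0 < α) (t : ℝ) :
    lSPH α t = Real.sqrt (1 + 1 / α ^ 2) * (t ^ 2 / (Real.sqrt (1 + t ^ 2 / α ^ 2) + 1)) := by
  have h1 : Real.sqrt (α ^ 2 + 1) = α * Real.sqrt (1 + 1 / α ^ 2) := by
    rw [show α ^ 2 + 1 = α ^ 2 * (1 + 1 / α ^ 2) by field_simp, Real.sqrt_mul (by positivity),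
      Real.sqrt_sq h.le]
  have h2 : Real.sqrt (1 + t ^ 2 / α ^ 2) ^ 2 = 1 + t ^ 2 / α ^ 2 := Real.sq_sqrt (by positivity)
  have h3 : t ^ 2 = α ^ 2 * (Real.sqrt (1 + t ^ 2 / α ^ 2) ^ 2 - 1) := by
    rw [h2]; field_simp; ring
  unfold lSPH
  rw [h1]
  have h4 : 0 ≤ Real.sqrt (1 + t ^ 2 / α ^ 2) := Real.sqrt_nonneg _
  generalize Real.sqrt (1 + t ^ 2 / α ^ 2) = s at *
  rw [h3]
  have : s + 1 ≠ 0 := by positivity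
  field_simp
  ring

lemma lSPH_ge {α m : ℝ} (hm : 0 < m) (h : m ≤ α) (t : ℝ) :
    m ^ 2 * (Real.sqrt (1 + t ^ 2 / m ^ 2) - 1) ≤ lSPH α t := by
  have hα : 0 < α := hm.trans_le h
  rw [lSPH_eq hα]
  have e : m ^ 2 * (Real.sqrt (1 + t ^ 2 / m ^ 2) - 1)
      = 1 * (t ^ 2 / (Real.sqrt (1 + t ^ 2 / m ^ 2) + 1)) := by
    have h2 : Real.sqrt (1 + t ^ 2 / m ^ 2) ^ 2 = 1 + t ^ 2 / m ^ 2 := Real.sq_sqrt (by positivity)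
    have h3 : t ^ 2 = m ^ 2 * (Real.sqrt (1 + t ^ 2 / m ^ 2) ^ 2 - 1) := by
      rw [h2]; field_simp; ring
    have h4 : 0 ≤ Real.sqrt (1 + t ^ 2 / m ^ 2) := Real.sqrt_nonneg _
    generalize Real.sqrt (1 + t ^ 2 / m ^ 2) = s at *
    rw [h3]
    have : s + 1 ≠ 0 := by positivity
    field_simp
    ring
  rw [e]
  have h1 : 1 ≤ Real.sqrt (1 + 1 / α ^ 2) := by
    rw [Real.one_le_sqrt]
    have : 0 ≤ 1 / α ^ 2 := by positivity
    linarith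
  gcongr

lemma exp_lSPH_le {α m : ℝ} (hm : 0 < m) (h1 : m ≤ 1) (h : m ≤ α) (t : ℝ) :
    Real.exp (-(lSPH α t)) ≤ (Real.exp (m ^ 2) * 2 / m ^ 4) * (1 + t ^ 2)⁻¹ := by
  have hge := lSPH_ge hm h t
  have h2 : Real.sqrt (1 + t ^ 2 / m ^ 2) ^ 2 = 1 + t ^ 2 / m ^ 2 := Real.sq_sqrt (by positivity)
  have h4 : 0 ≤ Real.sqrt (1 + t ^ 2 / m ^ 2) := Real.sqrt_nonneg _
  generalize Real.sqrt (1 + t ^ 2 / m ^ 2) = s at *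
  have hs : 1 + t ^ 2 ≤ s ^ 2 := by
    rw [h2]
    have : t ^ 2 ≤ t ^ 2 / m ^ 2 := by
      rw [le_div_iff₀ (by positivity)]
      have : m ^ 2 ≤ 1 := pow_le_one₀ hm.le h1
      nlinarith [sq_nonneg t]
    linarith
  have hq := Real.quadratic_le_exp_of_nonneg (x := m ^ 2 * s) (by positivity)
  have hx : m ^ 4 * (1 + t ^ 2) / 2 ≤ Real.exp (m ^ 2 * s) := by
    have : m ^ 4 * (1 + t ^ 2) ≤ m ^ 4 * s ^ 2 := by gcongr
    have : 0 ≤ m ^ 2 * s := by positivity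
    nlinarith
  calc Real.exp (-(lSPH α t)) ≤ Real.exp (m ^ 2 - m ^ 2 * s) := by
        apply Real.exp_le_exp.2; linarith
    _ = Real.exp (m ^ 2) / Real.exp (m ^ 2 * s) := Real.exp_sub _ _
    _ ≤ Real.exp (m ^ 2) / (m ^ 4 * (1 + t ^ 2) / 2) := by gcongr
    _ = _ := by field_simp

lemma lSPH_cont (α : ℝ) : Continuous (fun t : ℝ => Real.exp (-(lSPH α t))) := by
  unfold lSPH
  fun_prop

lemma lSPH_tendsto (t : ℝ) :
    Tendsto (fun α : ℝ => Real.exp (-(lSPH α t))) atTop (nhds (Real.exp (-(1 / 2) * t ^ 2))) := by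
  have hz (c : ℝ) : Tendsto (fun α : ℝ => Real.sqrt (1 + c / α ^ 2)) atTop (nhds 1) := by
    have h0 : Tendsto (fun α : ℝ => c / α ^ 2) atTop (nhds 0) :=
      tendsto_const_nhds.div_atTop (tendsto_pow_atTop two_ne_zero)
    simpa using (h0.const_add 1).sqrt
  have hl : Tendsto (fun α : ℝ => lSPH α t) atTop (nhds (1 * (t ^ 2 / (1 + 1)))) := by
    refine Tendsto.congr' ?_ ((hz 1).mul
      ((tendsto_const_nhds (x := t ^ 2)).div ((hz (t ^ 2)).add_const 1) (by norm_num)))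
    filter_upwards [eventually_gt_atTop 0] with α hα
    exact (lSPH_eq hα t).symm
  have := (Real.continuous_exp.tendsto _).comp hl.neg
  rw [show -(1 / 2) * t ^ 2 = -(1 * (t ^ 2 / (1 + 1))) by ring]
  exact this

/-- For each `α > 0` the SPH generalized density
`f_α(ε) = exp(-lSPH α ε) / Z(α)` (with `Z(α) = ∫ exp(-lSPH α t) dt` finite and positive)
converges pointwise, as `α → ∞`, to the standard normal density `(1/√(2π)) exp(-ε²/2)`. -/
theorem sph_density_tendsto_gaussian (ε : ℝ) :
    (∀ α : ℝ, 0 < α →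
      Integrable (fun t : ℝ => Real.exp (-(lSPH α t))) ∧
        0 < ∫ t : ℝ, Real.exp (-(lSPH α t))) ∧
    Tendsto
      (fun α : ℝ => Real.exp (-(lSPH α ε)) / ∫ t : ℝ, Real.exp (-(lSPH α t)))
      atTop (nhds ((1 / Real.sqrt (2 * π)) * Real.exp (-(ε ^ 2) / 2))) := by
  constructor
  · intro α hα
    have hi : Integrable (fun t : ℝ => Real.exp (-(lSPH α t))) := by
      refine Integrable.mono' (integrable_inv_one_add_sq.const_mul
        (Real.exp ((min α 1) ^ 2) * 2 / (min α 1) ^ 4))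
        (lSPH_cont α).aestronglyMeasurable (ae_of_all _ fun t => ?_)
      · rw [Real.norm_eq_abs, abs_of_pos (Real.exp_pos _)]
        exact exp_lSPH_le (lt_min hα one_pos) (min_le_right _ _) (min_le_left _ _) t
    exact ⟨hi, integral_exp_pos hi⟩
  · have hZ : Tendsto (fun α : ℝ => ∫ t : ℝ, Real.exp (-(lSPH α t))) atTop
        (nhds (∫ t : ℝ, Real.exp (-(1 / 2) * t ^ 2))) := by
      refine tendsto_integral_filter_of_dominated_convergence
        (fun t => (Real.exp (1 ^ 2) * 2 / 1 ^ 4) * (1 + t ^ 2)⁻¹)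
        (Eventually.of_forall fun α => (lSPH_cont α).aestronglyMeasurable) ?_
        (integrable_inv_one_add_sq.const_mul _) (ae_of_all _ lSPH_tendsto)
      filter_upwards [eventually_ge_atTop 1] with α hα
      refine ae_of_all _ fun t => ?_
      rw [Real.norm_eq_abs, abs_of_pos (Real.exp_pos _)]
      exact exp_lSPH_le one_pos le_rfl hα t
    rw [integral_gaussian] at hZ
    have := (lSPH_tendsto ε).div hZ (by positivity)
    rw [show π / (1 / 2) = 2 * π by ring, show -(1 / 2) * ε ^ 2 = -(ε ^ 2) / 2 by ring] at this
    rw [mul_comm, ← div_eq_mul_one_div]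
    exact this
end
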